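/- Let (x,y) ∈ (0,1)². The point (x, y, F(x,y)) is a vertex of the graph of F — meaning that for all x', y' with 0 ≤ x' ≤ x, 0 ≤ y' ≤ y and x' + y' < x + y one has F(x',y') < F(x,y) — if and only if there exist coprime integers 0 < a < m such that (x, y, F(x,y)) equals ((m−a)/m, a/m, 1 + 1/m), or (a/m, 1 − 1/m, 1 + a/m), or (1 − 1/m, a/m, 1 + a/m). -/

import Mathlib

/-!
Write `F(x,y) = sup_q (⌊qx⌋ + ⌊qy⌋ + 1)/q`. The `q`-th term exceeds `x + y` by at most `1/q`, so the
supremum is attained as soon as it exceeds `x + y` (`F_attained`).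

For a vertex, comparison with `(0,0)` gives `F(x,y) > 1`, and a recurrence argument on the torus
(`lt_F_of_one_lt_add`) then gives `F(x,y) > x + y`. If `q` is the least denominator attaining the
supremum, the vertex condition forces `x = a/q`, `y = b/q` for integers `a`, `b`, and minimality
of `q` becomes
  `q < k + (k a mod q) + (k b mod q)` for all `0 < k < q`.
This is the hypothesis of White's theorem on empty lattice tetrahedra (the terminal lemma for
cyclic quotient threefold singularities), whose conclusion is that `a + b = q`, `a = q - 1` or
`b = q - 1`, with `a`, `b` coprime to `q`; these are the three families.

The terminal lemma is proved as follows. Put `α = q - a`, `β = q - b`, `γ = a + b + 1 - q`. The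
hypothesis is equivalent to `⌊kα/q⌋ + ⌊kβ/q⌋ + ⌊kγ/q⌋ = k - 1` for `0 < k < q`: at each step
`k = 2, …, q - 1` exactly one of the three floor functions jumps. It has to be shown that one of
`α, β, γ` equals `1`. At `k = 2` the largest of them, say `α`, must jump, so `q - α < q/2`, and the
jumps of `β` and `γ` together are exactly those of `q - α`. Jumps of `q - α` are so sparse that a
jump of `γ ≤ β` cannot lie between two consecutive jumps of `β` (`two_beatty_false`).

The converse is a direct estimate on the terms of the supremum.
-/

/-- The explicit Calegari--Walker formula. -/
noncomputable def F (x y : ℝ) : ℝ :=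
  sSup {t : ℝ | ∃ q : ℕ, 0 < q ∧ ∃ p₁ p₂ : ℤ,
    (p₁ : ℝ) ≤ q * x ∧ (p₂ : ℝ) ≤ q * y ∧ t = ((p₁ : ℝ) + (p₂ : ℝ) + 1) / q}

/-! ### Three floor functions with disjoint jumps -/

/-- A ceiling division, described without reference to `⌈·⌉`. -/
lemma exists_ceil (n t : ℤ) (ht : 0 < t) : ∃ k : ℤ, (k - 1) * t < n ∧ n ≤ k * t := by
  refine ⟨(n - 1) / t + 1, ?_, ?_⟩
  · have := Int.ediv_mul_le (n - 1) ht.ne'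
    linarith
  · have := Int.lt_ediv_add_one_mul_self (n - 1) ht
    linarith

/-- The jumps of `k ↦ ⌊kδ/q⌋` cannot be split between `⌊kβ/q⌋` and `⌊kγ/q⌋` with `β, γ ≥ 2` when
`δ < q/2`. -/
lemma two_beatty_false (q δ β γ : ℤ) (hγ : 2 ≤ γ) (hγβ : γ ≤ β) (hsum : β + γ = δ + 1)
    (hδ : 2 * δ < q)
    (H : ∀ k, 0 < k → k < q → k * δ / q = k * β / q + k * γ / q)
    (hβ : ∀ k, 0 < k → k < q → ¬ q ∣ k * β) : False := by
  have hq : 0 < q := by linarith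
  have hδ3 : 3 ≤ δ := by linarith
  -- `m` is the first jump of `δ`; since `γ ≤ β` it is also a jump of `β`.
  obtain ⟨m, hm1, hm2⟩ := exists_ceil q δ (by linarith)
  have hm0 : 0 < m := by
    by_contra h
    nlinarith
  have hmq : m < q := by
    by_contra h
    nlinarith
  have hmβ : q ≤ m * β := by
    by_contra h
    have h1 : m * β / q = 0 := Int.ediv_eq_zero_of_lt (by nlinarith) (by linarith)
    have h2 : m * γ / q = 0 := Int.ediv_eq_zero_of_lt (by nlinarith) (by nlinarith)
    have h3 : 1 ≤ m * δ / q := (Int.le_ediv_iff_mul_le hq).2 (by linarith)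
    have := H m hm0 hmq
    omega
  -- `k₀` is the first jump of `γ`.
  obtain ⟨k₀, hk1, hk2⟩ := exists_ceil q γ (by linarith)
  have hk0 : 2 ≤ k₀ := by
    by_contra h
    nlinarith
  have hkq : k₀ < q := by
    by_contra h
    nlinarith
  have hγk : k₀ * γ / q = 1 := by
    apply le_antisymm
    · exact Int.lt_add_one_iff.1 ((Int.ediv_lt_iff_lt_mul hq).2 (by nlinarith))
    · exact (Int.le_ediv_iff_mul_le hq).2 (by linarith)
  have hγ0 : ∀ k, 0 ≤ k → k < k₀ → k * γ / q = 0 := fun k h0 h1 =>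
    Int.ediv_eq_zero_of_lt (by nlinarith) (by nlinarith)
  have e0 := H k₀ (by linarith) hkq
  have e1 := H (k₀ - 1) (by linarith) (by linarith)
  rw [hγ0 (k₀ - 1) (by linarith) (by linarith)] at e1
  rw [hγk] at e0
  -- `j` is the number of jumps of `β` up to `k₀`, and also up to `k₀ - 1`.
  obtain ⟨j, hj⟩ : ∃ j, j = k₀ * β / q := ⟨_, rfl⟩
  have hj1 : j * q ≤ k₀ * β := by rw [hj]; exact Int.ediv_mul_le _ hq.ne'
  have hj2 : k₀ * β < (j + 1) * q := by rw [hj]; exact Int.lt_ediv_add_one_mul_self _ hq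
  have hjj : (k₀ - 1) * β / q = j := by
    have a1 : (k₀ - 1) * β / q ≤ j := by
      rw [hj]; exact Int.ediv_le_ediv hq (by nlinarith)
    have a2 : k₀ * δ / q ≤ (k₀ - 1) * δ / q + 1 := by
      have : (k₀ - 1) * δ / q + 1 = ((k₀ - 1) * δ + q) / q := by
        rw [Int.add_ediv_of_dvd_right (dvd_refl q), Int.ediv_self hq.ne']
      rw [this]
      exact Int.ediv_le_ediv hq (by nlinarith)
    omega
  have hj3 : j * q ≤ (k₀ - 1) * β := by rw [← hjj]; exact Int.ediv_mul_le _ hq.ne'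
  have hj4 : (k₀ - 1) * δ < (j + 1) * q := by
    rw [← hjj, ← add_zero ((k₀ - 1) * β / q), ← e1]
    exact Int.lt_ediv_add_one_mul_self _ hq
  have hjpos : 1 ≤ j := by
    rw [hj]; exact (Int.le_ediv_iff_mul_le hq).2 (by nlinarith)
  have hjβ : j < β := by
    by_contra h
    nlinarith
  -- `k₁ < k₀ < k₂` are the consecutive jumps of `β` around `k₀`.
  obtain ⟨k₁, hk11, hk12⟩ := exists_ceil (j * q) β (by linarith)
  have hk1pos : 1 ≤ k₁ := by
    have : 0 < k₁ * β := lt_of_lt_of_le (mul_pos hjpos hq) hk12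
    exact pos_of_mul_pos_left this (by linarith)
  have hk1le : k₁ < k₀ := by
    have := lt_of_mul_lt_mul_right (hk11.trans_le hj3) (by linarith)
    linarith
  have hk1δ : (k₁ - 1) * δ < j * q := by
    rcases eq_or_lt_of_le hk1pos with h | h
    · rw [← h, sub_self, zero_mul]; exact mul_pos hjpos hq
    · have h1 := H (k₁ - 1) (by linarith) (by linarith)
      rw [hγ0 (k₁ - 1) (by linarith) (by linarith)] at h1
      have h2 : (k₁ - 1) * β / q < j := (Int.ediv_lt_iff_lt_mul hq).2 hk11
      exact (Int.ediv_lt_iff_lt_mul hq).1 (by omega)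
  by_cases hlast : j + 1 = β
  · -- There is no jump of `β` after `k₀`: impossible, as the reflection `k ↦ q + 1 - k`
    -- preserves jumps and `k₀` would be reflected to a jump of `δ` below the first one of `β`.
    have b1 : (q + 1 - k₀) * β ≤ q := by
      rw [eq_sub_of_add_eq hlast] at hj3
      linarith
    have b2 : (q + 1 - k₀) * β < q := lt_of_le_of_ne b1 fun h =>
      hβ (q + 1 - k₀) (by linarith) (by linarith) (by rw [h])
    have b3 : (q + 1 - k₀) * γ ≤ (q + 1 - k₀) * β :=
      mul_le_mul_of_nonneg_left hγβ (by linarith)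
    have c1 : (q + 1 - k₀) * β / q = 0 :=
      Int.ediv_eq_zero_of_lt (mul_nonneg (by linarith) (by linarith)) b2
    have c2 : (q + 1 - k₀) * γ / q = 0 :=
      Int.ediv_eq_zero_of_lt (mul_nonneg (by linarith) (by linarith)) (b3.trans_lt b2)
    have c3 := H (q + 1 - k₀) (by linarith) (by linarith)
    have c4 : (q + 1 - k₀) * δ < 1 * q := (Int.ediv_lt_iff_lt_mul hq).1 (by omega)
    rw [hlast] at hj4
    have c5 : q * 1 ≤ q * (δ - β) := mul_le_mul_of_nonneg_left (by linarith) hq.le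
    linarith
  · obtain ⟨k₂, hk21, hk22⟩ := exists_ceil ((j + 1) * q) β (by linarith)
    have hk2ge : k₀ < k₂ := lt_of_mul_lt_mul_right (hj2.trans_le hk22) (by linarith)
    have hk2q : k₂ < q := by
      have h1 : j + 1 ≤ β - 1 := by omega
      have h2 : (j + 1) * q ≤ (β - 1) * q := mul_le_mul_of_nonneg_right h1 hq.le
      have h3 : (k₂ - 1) * β < (q - 1) * β := by linarith
      have := lt_of_mul_lt_mul_right h3 (by linarith)
      linarith
    have hk2δ : (j + 2) * q ≤ k₂ * δ := by
      have h1 := H k₂ (by linarith) hk2q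
      have h2 : 1 ≤ k₂ * γ / q := (Int.le_ediv_iff_mul_le hq).2 (by
        have : k₀ * γ ≤ k₂ * γ := mul_le_mul_of_nonneg_right hk2ge.le (by linarith)
        linarith)
      have h3 : j + 1 ≤ k₂ * β / q := (Int.le_ediv_iff_mul_le hq).2 hk22
      exact (Int.le_ediv_iff_mul_le hq).1 (by omega)
    -- Two gaps of `δ` would fit into one gap of `β`, which is at most `m`.
    have hgap : k₂ - k₁ ≤ m := by
      have : (k₂ - 1 - k₁) * β < m * β := by linarith
      have := lt_of_mul_lt_mul_right this (by linarith)
      linarith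
    have : (k₂ - k₁) * δ ≤ m * δ := mul_le_mul_of_nonneg_right hgap (by linarith)
    linarith

lemma floor_compl (q t k : ℤ) (hq : 0 < q) (h : ¬ q ∣ k * t) :
    k * (q - t) / q = k - 1 - k * t / q := by
  have h1 := Int.emod_add_mul_ediv (k * t) q
  have h2 := Int.emod_lt_of_pos (k * t) hq
  have h3 := Int.emod_nonneg (k * t) hq.ne'
  have h4 : k * t % q ≠ 0 := fun h0 => h (Int.dvd_of_emod_eq_zero h0)
  have h5 : 0 < k * t % q := lt_of_le_of_ne h3 (Ne.symm h4)
  apply le_antisymm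
  · exact Int.lt_add_one_iff.1 ((Int.ediv_lt_iff_lt_mul hq).2 (by nlinarith))
  · exact (Int.le_ediv_iff_mul_le hq).2 (by nlinarith)

/-- The case of `three_beatty` in which the weights are ordered. -/
lemma three_beatty_sorted (q α β γ : ℤ) (hγ : 0 < γ) (hγβ : γ ≤ β) (hβα : β ≤ α)
    (hsum : α + β + γ = q + 1)
    (H : ∀ k, 0 < k → k < q → k * α / q + k * β / q + k * γ / q = k - 1)
    (hα : ∀ k, 0 < k → k < q → ¬ q ∣ k * α)
    (hβ : ∀ k, 0 < k → k < q → ¬ q ∣ k * β) : γ = 1 := by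
  by_contra hne
  have hγ2 : 2 ≤ γ := by omega
  have h2 : q < 2 * α := by
    by_contra hlt
    have hlt' : 2 * α < q := lt_of_le_of_ne (by linarith) fun h =>
      hα 2 (by norm_num) (by linarith) (by rw [h])
    have := H 2 (by norm_num) (by linarith)
    rw [Int.ediv_eq_zero_of_lt (by linarith) hlt',
      Int.ediv_eq_zero_of_lt (by linarith) (by linarith),
      Int.ediv_eq_zero_of_lt (by linarith) (by linarith)] at this
    norm_num at this
  refine two_beatty_false q (q - α) β γ hγ2 hγβ (by linarith) (by linarith) ?_ hβ
  intro k hk hkq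
  have := H k hk hkq
  rw [floor_compl q α k (by linarith) (hα k hk hkq)]
  linarith

/-- If exactly one of the three floor functions jumps at each step, one of the weights is `1`. -/
lemma three_beatty (q α β γ : ℤ) (h0α : 0 < α) (h0β : 0 < β) (h0γ : 0 < γ)
    (hsum : α + β + γ = q + 1)
    (H : ∀ k, 0 < k → k < q → k * α / q + k * β / q + k * γ / q = k - 1)
    (hα : ∀ k, 0 < k → k < q → ¬ q ∣ k * α)
    (hβ : ∀ k, 0 < k → k < q → ¬ q ∣ k * β)
    (hγ : ∀ k, 0 < k → k < q → ¬ q ∣ k * γ) : α = 1 ∨ β = 1 ∨ γ = 1 := by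
  rcases le_total α β with h1 | h1 <;> rcases le_total β γ with h2 | h2 <;>
    rcases le_total α γ with h3 | h3
  · exact Or.inl (three_beatty_sorted q γ β α h0α h1 h2 (by linarith)
      (fun k a b => by linarith [H k a b]) hγ hβ)
  · exact Or.inl (three_beatty_sorted q γ β α h0α h1 h2 (by linarith)
      (fun k a b => by linarith [H k a b]) hγ hβ)
  · exact Or.inl (three_beatty_sorted q β γ α h0α h3 h2 (by linarith)
      (fun k a b => by linarith [H k a b]) hβ hγ)
  · exact Or.inr (Or.inr (three_beatty_sorted q β α γ h0γ h3 h1 (by linarith)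
      (fun k a b => by linarith [H k a b]) hβ hα))
  · exact Or.inr (Or.inl (three_beatty_sorted q γ α β h0β h1 h3 (by linarith)
      (fun k a b => by linarith [H k a b]) hγ hα))
  · exact Or.inr (Or.inl (three_beatty_sorted q α γ β h0β h2 h3 (by linarith)
      (fun k a b => by linarith [H k a b]) hα hγ))
  · exact Or.inr (Or.inr (three_beatty_sorted q α β γ h0γ h2 h1 (by linarith)
      (fun k a b => by linarith [H k a b]) hα hβ))
  · exact Or.inr (Or.inr (three_beatty_sorted q α β γ h0γ h2 h1 (by linarith)
      (fun k a b => by linarith [H k a b]) hα hβ))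

/-! ### The terminal lemma -/

lemma emod_reflect (q t k : ℤ) (hq : 0 < q) (h : ¬ q ∣ k * t) :
    (q - k) * t % q = q - k * t % q := by
  have h2 := Int.emod_lt_of_pos (k * t) hq
  have h3 := Int.emod_nonneg (k * t) hq.ne'
  have h4 : k * t % q ≠ 0 := fun h0 => h (Int.dvd_of_emod_eq_zero h0)
  have h1 := Int.emod_add_mul_ediv (k * t) q
  have : (q - k) * t = (q - k * t % q) + q * (t - 1 - k * t / q) := by linarith
  rw [this, Int.add_mul_emod_self_left]
  exact Int.emod_eq_of_lt (by omega) (by omega)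

/-- The terminal hypothesis forces `a` to be coprime to `q`: otherwise the sums for `k` and `q - k`
add up to at most `2q`. -/
lemma terminal_not_dvd (q a b : ℤ)
    (T : ∀ k, 0 < k → k < q → q < k + k * a % q + k * b % q) :
    ∀ k, 0 < k → k < q → ¬ q ∣ k * a := by
  intro k hk hkq hd
  have hq : 0 < q := by linarith
  have t1 := T k hk hkq
  have t2 := T (q - k) (by linarith) (by linarith)
  have e1 : k * a % q = 0 := Int.emod_eq_zero_of_dvd hd
  have e2 : (q - k) * a % q = 0 := Int.emod_eq_zero_of_dvd (by
    rw [sub_mul]; exact dvd_sub (dvd_mul_right _ _) hd)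
  by_cases hb : q ∣ k * b
  · rw [e1, Int.emod_eq_zero_of_dvd hb] at t1
    linarith
  · rw [e2, emod_reflect q b k hq hb] at t2
    linarith

/-- The terminal lemma (White's theorem). -/
lemma terminal_lemma (q a b : ℤ) (hq : 2 ≤ q) (haq : a < q) (hbq : b < q)
    (T : ∀ k, 0 < k → k < q → q < k + k * a % q + k * b % q) (ha0 : 0 < a) (hb0 : 0 < b) :
    a + b = q ∨ a = q - 1 ∨ b = q - 1 := by
  have hq0 : 0 < q := by linarith
  have ha := terminal_not_dvd q a b T
  have hb := terminal_not_dvd q b a (fun k h1 h2 => by linarith [T k h1 h2])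
  have U : ∀ k, 0 < k → k < q → k + k * a % q + k * b % q < 2 * q := by
    intro k h1 h2
    have := T (q - k) (by linarith) (by linarith)
    rw [emod_reflect q a k hq0 (ha k h1 h2), emod_reflect q b k hq0 (hb k h1 h2)] at this
    linarith
  have hsum : q < 1 + a + b := by
    have := T 1 one_pos (by linarith)
    rwa [one_mul, one_mul, Int.emod_eq_of_lt ha0.le haq, Int.emod_eq_of_lt hb0.le hbq] at this
  -- The residue of `kγ` is the sum for `k` minus `q`.
  have key : ∀ k, 0 < k → k < q → k * (a + b + 1 - q) =
      (k + k * a % q + k * b % q - q) + q * (k * a / q + k * b / q - k + 1) := by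
    intro k _ _
    have e1 := Int.emod_add_mul_ediv (k * a) q
    have e2 := Int.emod_add_mul_ediv (k * b) q
    linarith
  have hr := three_beatty q (q - a) (q - b) (a + b + 1 - q) (by linarith) (by linarith)
    (by linarith) (by ring) ?_ ?_ ?_ ?_
  · omega
  · intro k h1 h2
    have e : (k + k * a % q + k * b % q - q) / q = 0 :=
      Int.ediv_eq_zero_of_lt (by linarith [T k h1 h2]) (by linarith [U k h1 h2])
    rw [floor_compl q a k hq0 (ha k h1 h2), floor_compl q b k hq0 (hb k h1 h2), key k h1 h2,
      Int.add_mul_ediv_left _ _ hq0.ne', e]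
    ring
  · intro k h1 h2 hd
    refine ha k h1 h2 ?_
    have : k * a = q * k - k * (q - a) := by ring
    rw [this]; exact dvd_sub (dvd_mul_right _ _) hd
  · intro k h1 h2 hd
    refine hb k h1 h2 ?_
    have : k * b = q * k - k * (q - b) := by ring
    rw [this]; exact dvd_sub (dvd_mul_right _ _) hd
  · intro k h1 h2 hd
    have h3 := Int.emod_eq_zero_of_dvd hd
    rw [key k h1 h2, Int.add_mul_emod_self_left,
      Int.emod_eq_of_lt (by linarith [T k h1 h2]) (by linarith [U k h1 h2])] at h3
    linarith [T k h1 h2]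

/-! ### The supremum defining `F` -/

lemma F_bddAbove (x y : ℝ) : BddAbove {t : ℝ | ∃ q : ℕ, 0 < q ∧ ∃ p₁ p₂ : ℤ,
    (p₁ : ℝ) ≤ q * x ∧ (p₂ : ℝ) ≤ q * y ∧ t = ((p₁ : ℝ) + (p₂ : ℝ) + 1) / q} := by
  refine ⟨x + y + 1, ?_⟩
  rintro t ⟨q, hq, p₁, p₂, h1, h2, rfl⟩
  have hq1 : (1 : ℝ) ≤ q := by exact_mod_cast hq
  rw [div_le_iff₀ (by linarith)]
  nlinarith

lemma le_F (x y : ℝ) (q : ℕ) (hq : 0 < q) (p₁ p₂ : ℤ) (h1 : (p₁ : ℝ) ≤ q * x)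
    (h2 : (p₂ : ℝ) ≤ q * y) : ((p₁ : ℝ) + (p₂ : ℝ) + 1) / q ≤ F x y :=
  le_csSup (F_bddAbove x y) ⟨q, hq, p₁, p₂, h1, h2, rfl⟩

/-- The supremum is a maximum when it exceeds `x + y`, since only finitely many `q` can then
contribute. -/
lemma F_attained (x y : ℝ) (h : x + y < F x y) :
    ∃ q : ℕ, 0 < q ∧ F x y = ((⌊q * x⌋ : ℝ) + (⌊q * y⌋ : ℝ) + 1) / q := by
  obtain ⟨N, hN⟩ := exists_nat_gt (2 / (F x y - (x + y)))
  have hd : 0 < F x y - (x + y) := by linarith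
  have hN0 : (0 : ℝ) < N := lt_trans (by positivity) hN
  have hN0' : 0 < N := by exact_mod_cast hN0
  obtain ⟨q, hq, hmax⟩ := Finset.exists_max_image (Finset.Icc 1 N)
    (fun q : ℕ => ((⌊q * x⌋ : ℝ) + (⌊q * y⌋ : ℝ) + 1) / q) ⟨1, by simp; omega⟩
  have hq0 : 0 < q := (Finset.mem_Icc.1 hq).1
  refine ⟨q, hq0, le_antisymm ?_ (le_F x y q hq0 _ _ (Int.floor_le _) (Int.floor_le _))⟩
  by_contra hlt
  push Not at hlt
  have hb : F x y ≤ max (((⌊q * x⌋ : ℝ) + (⌊q * y⌋ : ℝ) + 1) / q)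
      (x + y + (F x y - (x + y)) / 2) := by
    refine csSup_le ⟨_, 1, one_pos, ⌊(1 : ℕ) * x⌋, ⌊(1 : ℕ) * y⌋, Int.floor_le _,
      Int.floor_le _, rfl⟩ ?_
    rintro t ⟨k, hk, p₁, p₂, h1, h2, rfl⟩
    have hkR : (0 : ℝ) < k := by exact_mod_cast hk
    rcases le_or_gt k N with hkN | hkN
    · refine le_max_of_le_left (le_trans ?_ (hmax k (Finset.mem_Icc.2 ⟨hk, hkN⟩)))
      have e1 : (p₁ : ℝ) ≤ ⌊k * x⌋ := by exact_mod_cast Int.le_floor.2 h1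
      have e2 : (p₂ : ℝ) ≤ ⌊k * y⌋ := by exact_mod_cast Int.le_floor.2 h2
      gcongr
    · refine le_max_of_le_right ?_
      have hkN' : (N : ℝ) < k := by exact_mod_cast hkN
      rw [div_lt_iff₀ hd] at hN
      rw [div_le_iff₀ hkR]
      nlinarith
  rcases le_max_iff.1 hb with h' | h' <;> linarith

/-- By recurrence on the torus, some `q ≥ 2` makes `qx` and `qy` both nearly integral; then
`q - 1` gives a term of the supremum exceeding `x + y`. -/
lemma lt_F_of_one_lt_add (x y : ℝ) (hx : x < 1) (hy : y < 1) (hxy : 1 < x + y) :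
    x + y < F x y := by
  obtain ⟨ε, hε, hεx, hεy, hεs⟩ : ∃ ε : ℝ, 0 < ε ∧ ε ≤ 1 - x ∧ ε ≤ 1 - y ∧ 2 * ε ≤ x + y - 1 := by
    refine ⟨min (min (1 - x) (1 - y)) ((x + y - 1) / 2), ?_, ?_, ?_, ?_⟩
    · exact lt_min (lt_min (by linarith) (by linarith)) (by linarith)
    · exact (min_le_left _ _).trans (min_le_left _ _)
    · exact (min_le_left _ _).trans (min_le_right _ _)
    · linarith [min_le_right (min (1 - x) (1 - y)) ((x + y - 1) / 2)]
  let u : ℕ → ℝ × ℝ := fun n => (Int.fract (n * x), Int.fract (n * y))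
  have hu : ∀ n, u n ∈ Set.Icc (0 : ℝ) 1 ×ˢ Set.Icc (0 : ℝ) 1 := fun n =>
    ⟨⟨Int.fract_nonneg _, (Int.fract_lt_one _).le⟩, ⟨Int.fract_nonneg _, (Int.fract_lt_one _).le⟩⟩
  obtain ⟨l, -, φ, hφ, hl⟩ := (isCompact_Icc.prod isCompact_Icc).tendsto_subseq hu
  obtain ⟨N, hN⟩ := Metric.cauchySeq_iff.1 hl.cauchySeq ε hε
  have hd := hN (N + 2) (by omega) N le_rfl
  have hφ1 : φ N < φ (N + 1) := hφ (by omega)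
  have hφ2 : φ (N + 1) < φ (N + 2) := hφ (by omega)
  obtain ⟨i, hi⟩ : ∃ i, i = φ N := ⟨_, rfl⟩
  obtain ⟨r, hr0, hr⟩ : ∃ r : ℕ, 0 < r ∧ φ (N + 2) = i + r + 1 :=
    ⟨φ (N + 2) - i - 1, by omega, by omega⟩
  simp only [Function.comp, u, ← hi, hr, Prod.dist_eq, max_lt_iff, Real.dist_eq, abs_lt] at hd
  obtain ⟨⟨hx1, hx2⟩, hy1, hy2⟩ := hd
  have fx1 := Int.floor_add_fract (((i + r + 1 : ℕ) : ℝ) * x)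
  have fx2 := Int.floor_add_fract ((i : ℝ) * x)
  have fy1 := Int.floor_add_fract (((i + r + 1 : ℕ) : ℝ) * y)
  have fy2 := Int.floor_add_fract ((i : ℝ) * y)
  have hle := le_F x y r hr0 (⌊((i + r + 1 : ℕ) : ℝ) * x⌋ - ⌊(i : ℝ) * x⌋ - 1)
    (⌊((i + r + 1 : ℕ) : ℝ) * y⌋ - ⌊(i : ℝ) * y⌋ - 1)
    (by push_cast at *; linarith) (by push_cast at *; linarith)
  refine lt_of_lt_of_le ?_ hle
  rw [lt_div_iff₀ (by exact_mod_cast hr0)]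
  push_cast at *
  linarith

/-! ### Vertices lie in the three families -/

lemma coprime_of_not_dvd (a q : ℕ) (hq : 0 < q)
    (h : ∀ k : ℤ, 0 < k → k < q → ¬ (q : ℤ) ∣ k * a) : Nat.Coprime a q := by
  by_contra hne
  have hg : 0 < Nat.gcd a q := Nat.gcd_pos_of_pos_right _ hq
  have hg2 : 1 < Nat.gcd a q := by
    have : Nat.gcd a q ≠ 1 := hne
    omega
  obtain ⟨k, hk⟩ := Nat.gcd_dvd_right a q
  obtain ⟨c, hc⟩ := Nat.gcd_dvd_left a q
  have hk0 : 0 < k := Nat.pos_of_ne_zero (by rintro rfl; omega)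
  refine h k (by exact_mod_cast hk0) (by exact_mod_cast (by nlinarith : k < q)) ?_
  exact_mod_cast (⟨c, by nlinarith⟩ : q ∣ k * a)

lemma vertex_forward (x y : ℝ) (hx : x ∈ Set.Ioo (0:ℝ) 1) (hy : y ∈ Set.Ioo (0:ℝ) 1)
    (V : ∀ x' y' : ℝ, 0 ≤ x' → x' ≤ x → 0 ≤ y' → y' ≤ y → x' + y' < x + y →
      F x' y' < F x y) :
    ∃ a m : ℕ, 0 < a ∧ a < m ∧ Nat.Coprime a m ∧
      (((x, y, F x y) : ℝ × ℝ × ℝ) = ((((m:ℝ)-a)/m, (a:ℝ)/m, 1 + 1/(m:ℝ)) : ℝ × ℝ × ℝ) ∨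
       ((x, y, F x y) : ℝ × ℝ × ℝ) = (((a:ℝ)/m, 1 - 1/(m:ℝ), 1 + (a:ℝ)/m) : ℝ × ℝ × ℝ) ∨
       ((x, y, F x y) : ℝ × ℝ × ℝ) = ((1 - 1/(m:ℝ), (a:ℝ)/m, 1 + (a:ℝ)/m) : ℝ × ℝ × ℝ)) := by
  obtain ⟨hx0, hx1⟩ := hx
  obtain ⟨hy0, hy1⟩ := hy
  have hF1 : 1 < F x y := by
    have h1 := V 0 0 le_rfl hx0.le le_rfl hy0.le (by linarith)
    have h2 := le_F 0 0 1 one_pos 0 0 (by simp) (by simp)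
    norm_num at h2
    linarith
  have hFs : x + y < F x y := by
    rcases le_or_gt (x + y) 1 with h | h
    · linarith
    · exact lt_F_of_one_lt_add x y hx1 hy1 h
  -- A pair of integers attaining the maximum with denominator `k` lies at `(x, y)` itself.
  have rigid : ∀ k : ℕ, 0 < k → ∀ p₁ p₂ : ℤ, 0 ≤ p₁ → 0 ≤ p₂ → (p₁ : ℝ) ≤ k * x →
      (p₂ : ℝ) ≤ k * y → F x y ≤ ((p₁ : ℝ) + p₂ + 1) / k → (p₁ : ℝ) = k * x ∧ (p₂ : ℝ) = k * y := by
    intro k hk p₁ p₂ n1 n2 h1 h2 hF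
    have hkR : (0 : ℝ) < k := by exact_mod_cast hk
    have n1' : (0 : ℝ) ≤ p₁ := by exact_mod_cast n1
    have n2' : (0 : ℝ) ≤ p₂ := by exact_mod_cast n2
    have hle := le_F (p₁ / k) (p₂ / k) k hk p₁ p₂ (by rw [mul_div_cancel₀ _ hkR.ne'])
      (by rw [mul_div_cancel₀ _ hkR.ne'])
    by_contra hne
    have hlt : (p₁ : ℝ) + p₂ < k * x + k * y := by
      by_contra hge
      exact hne ⟨by linarith, by linarith⟩
    have := V (p₁ / k) (p₂ / k) (by positivity) (by rw [div_le_iff₀ hkR]; linarith)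
      (by positivity) (by rw [div_le_iff₀ hkR]; linarith)
      (by rw [← add_div, div_lt_iff₀ hkR]; linarith)
    linarith
  classical
  have hex := F_attained x y hFs
  obtain ⟨q, ⟨hq0, hFq⟩, hmin⟩ : ∃ q : ℕ,
      (0 < q ∧ F x y = ((⌊q * x⌋ : ℝ) + (⌊q * y⌋ : ℝ) + 1) / q) ∧
      ∀ k : ℕ, k < q → ¬ (0 < k ∧ F x y = ((⌊k * x⌋ : ℝ) + (⌊k * y⌋ : ℝ) + 1) / k) :=
    ⟨Nat.find hex, Nat.find_spec hex, fun k hk => Nat.find_min hex hk⟩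
  have hqR : (0 : ℝ) < q := by exact_mod_cast hq0
  obtain ⟨ex, ey⟩ := rigid q hq0 ⌊q * x⌋ ⌊q * y⌋ (Int.floor_nonneg.2 (by positivity))
    (Int.floor_nonneg.2 (by positivity)) (Int.floor_le _) (Int.floor_le _) hFq.le
  have na : 0 < ⌊q * x⌋ := by
    have : (0 : ℝ) < ⌊q * x⌋ := by rw [ex]; positivity
    exact_mod_cast this
  have nb : 0 < ⌊q * y⌋ := by
    have : (0 : ℝ) < ⌊q * y⌋ := by rw [ey]; positivity
    exact_mod_cast this
  obtain ⟨a, ha⟩ := Int.eq_ofNat_of_zero_le na.le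
  obtain ⟨b, hb⟩ := Int.eq_ofNat_of_zero_le nb.le
  rw [ha, hb] at hFq
  rw [ha] at ex na
  rw [hb] at ey nb
  push_cast at ex ey hFq
  have ha0 : 0 < a := by exact_mod_cast na
  have hb0 : 0 < b := by exact_mod_cast nb
  have haq : a < q := by
    have : (a : ℝ) < q := by nlinarith
    exact_mod_cast this
  have hbq : b < q := by
    have : (b : ℝ) < q := by nlinarith
    exact_mod_cast this
  have T : ∀ k : ℤ, 0 < k → k < q → (q : ℤ) < k + k * a % q + k * b % q := by
    intro k hk hkq
    obtain ⟨k, rfl⟩ := Int.eq_ofNat_of_zero_le hk.le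
    have hk' : 0 < k := by exact_mod_cast hk
    have hkq' : k < q := by exact_mod_cast hkq
    have hkR : (0 : ℝ) < k := by exact_mod_cast hk'
    have hqZ : (0 : ℤ) < q := by exact_mod_cast hq0
    have d1 := Int.emod_add_mul_ediv ((k : ℤ) * a) q
    have d2 := Int.emod_add_mul_ediv ((k : ℤ) * b) q
    have m1 := Int.emod_nonneg ((k : ℤ) * a) hqZ.ne'
    have m2 := Int.emod_nonneg ((k : ℤ) * b) hqZ.ne'
    have n1 : 0 ≤ (k : ℤ) * a / q := by positivity
    have n2 : 0 ≤ (k : ℤ) * b / q := by positivity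
    generalize (k : ℤ) * a / q = P₁ at *
    generalize (k : ℤ) * b / q = P₂ at *
    have b1 : (P₁ : ℝ) ≤ k * x := by
      have : (q : ℝ) * P₁ ≤ k * a := by exact_mod_cast (by linarith : (q : ℤ) * P₁ ≤ k * a)
      rw [ex] at this
      exact le_of_mul_le_mul_left (by linarith) hqR
    have b2 : (P₂ : ℝ) ≤ k * y := by
      have : (q : ℝ) * P₂ ≤ k * b := by exact_mod_cast (by linarith : (q : ℤ) * P₂ ≤ k * b)
      rw [ey] at this
      exact le_of_mul_le_mul_left (by linarith) hqR
    have hlt : ((P₁ : ℝ) + P₂ + 1) / k < F x y := by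
      by_contra hge
      push Not at hge
      obtain ⟨r1, r2⟩ := rigid k hk' P₁ P₂ n1 n2 b1 b2 hge
      refine hmin k hkq' ⟨hk', ?_⟩
      rw [← r1, ← r2, Int.floor_intCast, Int.floor_intCast]
      exact le_antisymm hge (le_F x y k hk' P₁ P₂ b1 b2)
    rw [hFq, div_lt_div_iff₀ hkR hqR] at hlt
    have hlt' : (P₁ + P₂ + 1) * (q : ℤ) < (a + b + 1) * k := by exact_mod_cast hlt
    linarith
  have hxa : x = a / q := by rw [eq_div_iff hqR.ne']; linarith
  have hyb : y = b / q := by rw [eq_div_iff hqR.ne']; linarith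
  have cop_a := coprime_of_not_dvd a q hq0 (terminal_not_dvd q a b T)
  have cop_b := coprime_of_not_dvd b q hq0
    (terminal_not_dvd q b a (fun k h1 h2 => by linarith [T k h1 h2]))
  rcases terminal_lemma q a b (by omega) (by omega) (by omega) T (by omega) (by omega)
    with h | h | h
  · have hR : (a : ℝ) + b = q := by exact_mod_cast h
    refine ⟨b, q, hb0, hbq, cop_b, Or.inl ?_⟩
    rw [hFq, hxa, hyb, ← hR]
    have : (a : ℝ) + b ≠ 0 := by rw [hR]; exact hqR.ne'
    refine Prod.ext ?_ (Prod.ext rfl ?_) <;> simp only <;> field_simp <;> ring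
  · have hR : (a : ℝ) = q - 1 := by exact_mod_cast h
    refine ⟨b, q, hb0, hbq, cop_b, Or.inr (Or.inr ?_)⟩
    rw [hFq, hxa, hyb, hR]
    refine Prod.ext ?_ (Prod.ext rfl ?_) <;> simp only <;> field_simp <;> ring
  · have hR : (b : ℝ) = q - 1 := by exact_mod_cast h
    refine ⟨a, q, ha0, haq, cop_a, Or.inr (Or.inl ?_)⟩
    rw [hFq, hxa, hyb, hR]
    refine Prod.ext rfl (Prod.ext ?_ ?_) <;> simp only <;> field_simp <;> ring

/-! ### Points of the three families are vertices -/

lemma F_comm (x y : ℝ) : F x y = F y x := by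
  unfold F
  congr 1
  ext t
  constructor
  all_goals
    rintro ⟨q, hq, p₁, p₂, h1, h2, rfl⟩
    exact ⟨q, hq, p₂, p₁, h2, h1, by ring⟩

/-- The family on the anti-diagonal: below it, every term of the supremum is at most `1`. -/
lemma vertex_diag (x y : ℝ) (hs : x + y = 1) (hF : 1 < F x y) (x' y' : ℝ)
    (hlt : x' + y' < x + y) : F x' y' < F x y := by
  by_contra hge
  obtain ⟨k, hk, he⟩ := F_attained x' y' (by linarith)
  have hkR : (0 : ℝ) < k := by exact_mod_cast hk
  have h1 := Int.floor_le ((k : ℝ) * x')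
  have h2 := Int.floor_le ((k : ℝ) * y')
  have h3 : (⌊(k : ℝ) * x'⌋ : ℝ) + ⌊(k : ℝ) * y'⌋ < k := by nlinarith
  have h4 : ⌊(k : ℝ) * x'⌋ + ⌊(k : ℝ) * y'⌋ + 1 ≤ (k : ℤ) := by
    have : ⌊(k : ℝ) * x'⌋ + ⌊(k : ℝ) * y'⌋ < (k : ℤ) := by exact_mod_cast h3
    linarith
  have h5 : (⌊(k : ℝ) * x'⌋ : ℝ) + ⌊(k : ℝ) * y'⌋ + 1 ≤ k := by exact_mod_cast h4
  have : F x' y' ≤ 1 := by rw [he, div_le_one hkR]; exact h5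
  linarith

/-- The two remaining families, up to exchanging the coordinates. -/
lemma vertex_side (a m : ℕ) (ham : a < m) (hc : Nat.Coprime a m) (x y : ℝ)
    (hxe : x = a / m) (hye : y = 1 - 1 / m) (hFe : F x y = 1 + a / m) (x' y' : ℝ)
    (hx' : x' ≤ x) (hy' : y' ≤ y) (hlt : x' + y' < x + y) : F x' y' < F x y := by
  by_contra hge
  have hm : 0 < m := by omega
  have hmR : (0 : ℝ) < m := by exact_mod_cast hm
  have hinv : (0 : ℝ) < 1 / m := by positivity
  obtain ⟨k, hk, he⟩ := F_attained x' y' (by linarith)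
  have hkR : (0 : ℝ) < k := by exact_mod_cast hk
  have h1 := Int.floor_le ((k : ℝ) * x')
  have h2 := Int.floor_le ((k : ℝ) * y')
  generalize ⌊(k : ℝ) * x'⌋ = p₁ at *
  generalize ⌊(k : ℝ) * y'⌋ = p₂ at *
  have hp2 : (p₂ : ℝ) + 1 ≤ k := by
    have : (p₂ : ℝ) < k := by nlinarith
    have : p₂ < (k : ℤ) := by exact_mod_cast this
    have : p₂ + 1 ≤ (k : ℤ) := by linarith
    exact_mod_cast this
  have hge_k : (1 + (a : ℝ) / m) * k ≤ p₁ + p₂ + 1 := by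
    rw [← le_div_iff₀ hkR, ← he, ← hFe]; linarith
  have hkx : (k : ℝ) * x' ≤ k * x := by gcongr
  have hky : (k : ℝ) * y' ≤ k * y := by gcongr
  rw [← hxe] at hge_k
  -- All inequalities are equalities; `p₁ = ka/m` is an integer, so `m ∣ k`.
  have e1 : (p₁ : ℝ) = k * x := by linarith
  have e2 : (p₂ : ℝ) = k - 1 := by linarith
  have e3 : x' = x := by
    have : (k : ℝ) * x' = k * x := by linarith
    exact mul_left_cancel₀ hkR.ne' this
  have hdiv : (m : ℤ) ∣ k := by
    have h : p₁ * (m : ℤ) = k * a := by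
      have : (p₁ : ℝ) * m = k * a := by rw [e1, hxe]; field_simp
      exact_mod_cast this
    have hcz : IsCoprime (m : ℤ) (a : ℤ) := (Nat.isCoprime_iff_coprime.2 hc).symm
    exact hcz.dvd_of_dvd_mul_right ⟨p₁, by linarith⟩
  have hmk : m ≤ k := Nat.le_of_dvd hk (by exact_mod_cast hdiv)
  have hmkR : (m : ℝ) ≤ k := by exact_mod_cast hmk
  have hkm : 1 ≤ (k : ℝ) * (1 / m) := by
    rw [mul_one_div, le_div_iff₀ hmR]; linarith
  have hyy : y' < y := by linarith
  have : (k : ℝ) * y' < k * y := by gcongr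
  have : (k : ℝ) * y = k - k * (1 / m) := by rw [hye]; ring
  linarith

theorem vertices_of_graph_of_F (x y : ℝ)
    (hx : x ∈ Set.Ioo (0:ℝ) 1) (hy : y ∈ Set.Ioo (0:ℝ) 1) :
    (∀ x' y' : ℝ, 0 ≤ x' → x' ≤ x → 0 ≤ y' → y' ≤ y → x' + y' < x + y →
      F x' y' < F x y) ↔
    ∃ a m : ℕ, 0 < a ∧ a < m ∧ Nat.Coprime a m ∧
      (((x, y, F x y) : ℝ × ℝ × ℝ) = ((((m:ℝ)-a)/m, (a:ℝ)/m, 1 + 1/(m:ℝ)) : ℝ × ℝ × ℝ) ∨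
       ((x, y, F x y) : ℝ × ℝ × ℝ) = (((a:ℝ)/m, 1 - 1/(m:ℝ), 1 + (a:ℝ)/m) : ℝ × ℝ × ℝ) ∨
       ((x, y, F x y) : ℝ × ℝ × ℝ) = ((1 - 1/(m:ℝ), (a:ℝ)/m, 1 + (a:ℝ)/m) : ℝ × ℝ × ℝ)) := by
  refine ⟨vertex_forward x y hx hy, ?_⟩
  rintro ⟨a, m, ha, ham, hc, h⟩ x' y' - hx' - hy' hlt
  have hmR : (0 : ℝ) < m := by exact_mod_cast (by omega : 0 < m)
  have hinv : (0 : ℝ) < 1 / m := by positivity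
  simp only [Prod.mk.injEq] at h
  rcases h with ⟨h1, h2, h3⟩ | ⟨h1, h2, h3⟩ | ⟨h1, h2, h3⟩
  · exact vertex_diag x y (by rw [h1, h2]; field_simp; ring) (by linarith) x' y' hlt
  · exact vertex_side a m ham hc x y h1 h2 h3 x' y' hx' hy' hlt
  · rw [F_comm x y, F_comm x' y']
    exact vertex_side a m ham hc y x h2 h1 (by rw [F_comm, h3]) y' x' hy' hx' (by linarith)
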